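/- Let q ∈ (0,1] and let X_1, X_2, … be random variables on a probability space (Ω, ℱ, P) taking values in {0,1}, adapted to a filtration (ℱ_w)_{w≥0}, such that E[X_w | ℱ_{w−1}] ≥ q almost surely for every w ≥ 1. Then for every integer T ≥ 1, ∑_{w=0}^{T−1} 𝟙{8 log T ≤ q w / 2} · P(∑_{v=1}^{w} X_v ≤ q w / 2) ≤ 1/T. -/

import Mathlib

/-!
The argument is a multiplicative Chernoff bound with tilt parameter `log 2`. On `{0,1}` one has
`2 ^ (-x) = 1 - x / 2`, so `M_w = ∏_{v ≤ w} (1 - X_v / 2)` is `2 ^ (-∑ X_v)`. Conditioning on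
`ℱ_w` gives `E[M_{w+1}] ≤ (1 - q/2) E[M_w]`, hence `E[M_w] ≤ (1 - q/2)^w ≤ exp (-q w / 2)`
(`integral_tilt_le`). Markov's inequality yields
`P(∑ X_v ≤ q w / 2) ≤ exp (-(1 - log 2) q w / 2) ≤ exp (-q w / 8)` (`lower_tail_le`). When
`q w ≥ 16 log T` this is at most `T⁻²`, and there are at most `T` such terms.
-/

open MeasureTheory ProbabilityTheory Finset

/-- The exponential weight `2 ^ (-∑_{v=1}^w X_v)` of `{0,1}`-valued `X_v`, written as a product that is
affine in each `X_v`. -/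
noncomputable def tilt {Ω : Type*} (X : ℕ → Ω → ℝ) (w : ℕ) (ω : Ω) : ℝ :=
  ∏ v ∈ Finset.Icc 1 w, (1 - X v ω / 2)

lemma tilt_succ {Ω : Type*} (X : ℕ → Ω → ℝ) (w : ℕ) (ω : Ω) :
    tilt X (w + 1) ω = tilt X w ω * (1 - X (w + 1) ω / 2) :=
  Finset.prod_Icc_succ_top (by omega) _

lemma tilt_eq_exp {Ω : Type*} {X : ℕ → Ω → ℝ} (hbool : ∀ w ω, X w ω = 0 ∨ X w ω = 1)
    (w : ℕ) (ω : Ω) :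
    tilt X w ω = Real.exp (-(Real.log 2 * ∑ v ∈ Finset.Icc 1 w, X v ω)) := by
  rw [Finset.mul_sum, ← Finset.sum_neg_distrib, Real.exp_sum]
  refine Finset.prod_congr rfl fun v _ => ?_
  rcases hbool v ω with h | h
  · simp [h]
  · rw [h, mul_one, Real.exp_neg, Real.exp_log (by norm_num)]
    norm_num

lemma tilt_nonneg {Ω : Type*} {X : ℕ → Ω → ℝ} (hbool : ∀ w ω, X w ω = 0 ∨ X w ω = 1)
    (w : ℕ) (ω : Ω) : 0 ≤ tilt X w ω := by
  rw [tilt_eq_exp hbool]; positivity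

lemma tilt_le_one {Ω : Type*} {X : ℕ → Ω → ℝ} (hbool : ∀ w ω, X w ω = 0 ∨ X w ω = 1)
    (w : ℕ) (ω : Ω) : tilt X w ω ≤ 1 := by
  refine Finset.prod_le_one (fun v _ => ?_) (fun v _ => ?_) <;>
    rcases hbool v ω with h | h <;> rw [h] <;> norm_num

lemma measurable_tilt {Ω : Type*} {m0 : MeasurableSpace Ω} {ℱ : Filtration ℕ m0}
    {X : ℕ → Ω → ℝ} (hadapted : Adapted ℱ X) (w : ℕ) : Measurable[ℱ w] (tilt X w) := by
  refine Finset.measurable_fun_prod _ fun v hv => ?_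
  have h : Measurable[ℱ w] (X v) :=
    (hadapted v).mono (ℱ.mono (Finset.mem_Icc.1 hv).2) le_rfl
  exact measurable_const.sub (h.div_const 2)

lemma integrable_tilt {Ω : Type*} {m0 : MeasurableSpace Ω} {P : Measure Ω}
    [IsProbabilityMeasure P] {ℱ : Filtration ℕ m0} {X : ℕ → Ω → ℝ} (hadapted : Adapted ℱ X)
    (hbool : ∀ w ω, X w ω = 0 ∨ X w ω = 1) (w : ℕ) : Integrable (tilt X w) P := by
  refine Integrable.of_bound
    ((measurable_tilt hadapted w).mono (ℱ.le w) le_rfl).aestronglyMeasurable 1 ?_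
  refine Filter.Eventually.of_forall fun ω => ?_
  rw [Real.norm_of_nonneg (tilt_nonneg hbool w ω)]
  exact tilt_le_one hbool w ω

lemma integral_tilt_le {Ω : Type*} {m0 : MeasurableSpace Ω} {P : Measure Ω}
    [IsProbabilityMeasure P] {ℱ : Filtration ℕ m0} {X : ℕ → Ω → ℝ} (hadapted : Adapted ℱ X)
    {q : ℝ} (hq1 : q ≤ 1) (hbool : ∀ w ω, X w ω = 0 ∨ X w ω = 1)
    (hcond : ∀ w, 1 ≤ w → (fun _ => q) ≤ᵐ[P] P[X w | ℱ (w - 1)]) (w : ℕ) :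
    ∫ ω, tilt X w ω ∂P ≤ (1 - q / 2) ^ w := by
  induction w with
  | zero => simp [tilt]
  | succ w ih =>
    have hX : Integrable (X (w + 1)) P := by
      refine Integrable.of_bound
        ((hadapted (w + 1)).mono (ℱ.le _) le_rfl).aestronglyMeasurable 1 ?_
      refine Filter.Eventually.of_forall fun ω => ?_
      rcases hbool (w + 1) ω with h | h <;> rw [h] <;> norm_num
    have hM := integrable_tilt (P := P) hadapted hbool w
    have hMX : Integrable (tilt X w * X (w + 1)) P := by
      refine hX.bdd_mul (c := 1) hM.aestronglyMeasurable ?_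
      refine Filter.Eventually.of_forall fun ω => ?_
      rw [Real.norm_of_nonneg (tilt_nonneg hbool w ω)]
      exact tilt_le_one hbool w ω
    have hpull : P[tilt X w * X (w + 1) | ℱ w] =ᵐ[P] tilt X w * P[X (w + 1) | ℱ w] :=
      condExp_mul_of_stronglyMeasurable_left
        (measurable_tilt hadapted w).stronglyMeasurable hMX hX
    have hlow : q * ∫ ω, tilt X w ω ∂P ≤ ∫ ω, (tilt X w * X (w + 1)) ω ∂P := by
      rw [← integral_condExp (f := tilt X w * X (w + 1)) (ℱ.le w), ← integral_const_mul]
      refine integral_mono_ae (hM.const_mul q) integrable_condExp ?_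
      filter_upwards [hpull, hcond (w + 1) (by omega)] with ω h1 h2
      rw [h1, Pi.mul_apply, mul_comm]
      exact mul_le_mul_of_nonneg_left h2 (tilt_nonneg hbool w ω)
    have hstep : ∫ ω, tilt X (w + 1) ω ∂P
        = ∫ ω, tilt X w ω ∂P - (∫ ω, (tilt X w * X (w + 1)) ω ∂P) / 2 := by
      rw [← integral_div, ← integral_sub hM (hMX.div_const 2)]
      refine integral_congr_ae (Filter.Eventually.of_forall fun ω => ?_)
      simp only [tilt_succ, Pi.mul_apply]
      ring
    calc ∫ ω, tilt X (w + 1) ω ∂P ≤ (∫ ω, tilt X w ω ∂P) * (1 - q / 2) := by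
          rw [hstep]; linarith
      _ ≤ (1 - q / 2) ^ w * (1 - q / 2) := by gcongr; linarith
      _ = (1 - q / 2) ^ (w + 1) := (pow_succ _ _).symm

/-- Chernoff bound for the lower tail; the constant `1/8` is a rounding of `(1 - log 2)/2`. -/
lemma lower_tail_le {Ω : Type*} {m0 : MeasurableSpace Ω} {P : Measure Ω}
    [IsProbabilityMeasure P] {ℱ : Filtration ℕ m0} {X : ℕ → Ω → ℝ} (hadapted : Adapted ℱ X)
    {q : ℝ} (hq0 : 0 < q) (hq1 : q ≤ 1) (hbool : ∀ w ω, X w ω = 0 ∨ X w ω = 1)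
    (hcond : ∀ w, 1 ≤ w → (fun _ => q) ≤ᵐ[P] P[X w | ℱ (w - 1)]) (w : ℕ) :
    (P {ω | ∑ v ∈ Finset.Icc 1 w, X v ω ≤ q * w / 2}).toReal ≤ Real.exp (-(q * w / 8)) := by
  have hlog : 0 < Real.log 2 := Real.log_pos (by norm_num)
  have hset : {ω | ∑ v ∈ Finset.Icc 1 w, X v ω ≤ q * w / 2}
      = {ω | Real.exp (-(Real.log 2 * (q * w / 2))) ≤ tilt X w ω} := by
    ext ω
    simp only [Set.mem_ofPred_eq, tilt_eq_exp hbool, Real.exp_le_exp, neg_le_neg_iff]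
    exact (mul_le_mul_iff_right₀ hlog).symm
  have hmarkov := mul_meas_ge_le_integral_of_nonneg (μ := P)
    (Filter.Eventually.of_forall (tilt_nonneg hbool w)) (integrable_tilt hadapted hbool w)
    (Real.exp (-(Real.log 2 * (q * w / 2))))
  rw [← hset, Measure.real] at hmarkov
  have hpow : (1 - q / 2) ^ w ≤ Real.exp (-(q * w / 2)) := by
    calc (1 - q / 2) ^ w ≤ Real.exp (-(q / 2)) ^ w :=
          pow_le_pow_left₀ (by linarith) (Real.one_sub_le_exp_neg _) w
      _ = Real.exp (-(q * w / 2)) := by rw [← Real.exp_nat_mul]; congr 1; ring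
  have h := (hmarkov.trans (integral_tilt_le hadapted hq1 hbool hcond w)).trans hpow
  rw [← le_div_iff₀' (Real.exp_pos _), ← Real.exp_sub] at h
  refine h.trans (Real.exp_le_exp.2 ?_)
  have hqw : 0 ≤ q * w := by positivity
  nlinarith [Real.log_two_lt_d9]

/-- Probabilistic core of Lemma 2: if `X_1, X_2, …` take values in `{0,1}`, are adapted
to a filtration `ℱ`, and `E[X_w | ℱ_{w-1}] ≥ q` a.s. for every `w ≥ 1`, then for every
integer `T ≥ 1`,
`∑_{w=0}^{T-1} 𝟙{8 log T ≤ q w / 2} · P(∑_{v=1}^{w} X_v ≤ q w / 2) ≤ 1/T`. -/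
theorem stmt_2 {Ω : Type*} {m0 : MeasurableSpace Ω} (P : Measure Ω) [IsProbabilityMeasure P]
    (ℱ : Filtration ℕ m0) (X : ℕ → Ω → ℝ) (hadapted : Adapted ℱ X)
    (q : ℝ) (hq0 : 0 < q) (hq1 : q ≤ 1)
    (hbool : ∀ w ω, X w ω = 0 ∨ X w ω = 1)
    (hcond : ∀ w, 1 ≤ w → (fun _ => q) ≤ᵐ[P] P[X w | ℱ (w - 1)])
    (T : ℕ) (hT : 1 ≤ T) :
    ∑ w ∈ Finset.range T,
        (if 8 * Real.log T ≤ q * w / 2 then (1 : ℝ) else 0) *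
          (P {ω | ∑ v ∈ Finset.Icc 1 w, X v ω ≤ q * w / 2}).toReal ≤
      1 / T := by
  have hTpos : (0 : ℝ) < T := by exact_mod_cast hT
  have hterm : ∀ w ∈ Finset.range T,
      (if 8 * Real.log T ≤ q * w / 2 then (1 : ℝ) else 0) *
          (P {ω | ∑ v ∈ Finset.Icc 1 w, X v ω ≤ q * w / 2}).toReal ≤ 1 / (T : ℝ) ^ 2 := by
    intro w _
    split_ifs with h
    · rw [one_mul]
      refine (lower_tail_le hadapted hq0 hq1 hbool hcond w).trans ?_
      have hT2 : 1 / (T : ℝ) ^ 2 = Real.exp (-(2 * Real.log T)) := by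
        rw [Real.exp_neg, two_mul, Real.exp_add, Real.exp_log hTpos, one_div, sq]
      rw [hT2]
      exact Real.exp_le_exp.2 (by linarith)
    · rw [zero_mul]; positivity
  refine (Finset.sum_le_sum hterm).trans (le_of_eq ?_)
  rw [Finset.sum_const, Finset.card_range, nsmul_eq_mul]
  field_simp
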